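/- arXiv:0801.4288 — 2 statements merged into one kernel-verified Lean document; each statement's English description precedes it below -/
import Mathlib

section
/- Let S = ℂ[x₀,…,xₙ] and suppose there exist homogeneous forms F₁,…,Fᵣ of degrees a₁,…,aᵣ and G₁,…,Gᵣ of degrees d−a₁,…,d−aᵣ such that (F₁,G₁)_d + ⋯ + (Fᵣ,Gᵣ)_d = S_d. Then the polynomial map (S_{a₁} × S_{d−a₁}) × ⋯ × (S_{aᵣ} × S_{d−aᵣ}) → S_d, ((Pᵢ,Qᵢ))ᵢ ↦ ∑ PᵢQᵢ, is dominant, i.e. its image contains a nonempty Zariski-open subset of S_d. -/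
open MvPolynomial

/-!
Let `f` be a tuple of polynomials whose Jacobian at a point `x` has a right inverse `B`. Along the
generic line through `x` in the directions of `B` one has `f (x + t B Y) = f x + t Y + O(t²)`, so
the lowest homogeneous component of an algebraic relation among the `f j - f x j` would be a
relation among the indeterminates `Y`. Hence the `f j` are algebraically independent, in any
characteristic. The induced map on spectra then hits the generic point; its image, constructible by
Chevalley's theorem, contains a nonempty basic open set, all of whose closed points lift to closed
points by the Nullstellensatz. The theorem is the case of the quadratic map
`(P, Q) ↦ ∑ i, P i * Q i`, whose differential at `(F, G)` has range `∑ i, (F i, G i)_d`.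
-/

section CommSemiring

variable {R A σ τ : Type*} [CommSemiring R] [CommSemiring A] [Algebra R A]

theorem aeval_mul_of_isHomogeneous {p : MvPolynomial τ R} {m : ℕ} (hp : p.IsHomogeneous m)
    (t : A) (w : τ → A) : aeval (fun j => t * w j) p = t ^ m * aeval w p := by
  rw [aeval_def, aeval_def, eval₂_eq, eval₂_eq, Finset.mul_sum]
  refine Finset.sum_congr rfl fun e he => ?_
  have hdeg : ∑ j ∈ e.support, e j = m := (hp.degree_eq_sum_deg_support he).symm
  simp only [mul_pow, Finset.prod_mul_distrib, Finset.prod_pow_eq_pow_sum, hdeg]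
  ring

theorem coeff_zero_aeval (w : τ → Polynomial A) (p : MvPolynomial τ R) :
    (aeval w p).coeff 0 = aeval (fun j => (w j).coeff 0) p := by
  induction p using MvPolynomial.induction_on with
  | C r => simp [Polynomial.algebraMap_apply]
  | add p q hp hq => simp [hp, hq]
  | mul_X p j hp => simp [Polynomial.mul_coeff_zero, hp]

theorem coeff_one_aeval [Fintype σ] (w : σ → Polynomial A) (f : MvPolynomial σ R) :
    (aeval w f).coeff 1 =
      ∑ i, aeval (fun k => (w k).coeff 0) (pderiv i f) * (w i).coeff 1 := by
  classical
  induction f using MvPolynomial.induction_on with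
  | C r => simp [Polynomial.algebraMap_apply]
  | add f g hf hg =>
    simp only [map_add, Polynomial.coeff_add, hf, hg, add_mul, Finset.sum_add_distrib]
  | mul_X f i hf =>
    simp only [map_mul, aeval_X, Polynomial.mul_coeff_one, coeff_zero_aeval, hf, Derivation.leibniz,
      smul_eq_mul, pderiv_X, map_add, add_mul, Finset.sum_add_distrib, Finset.sum_mul]
    congr 1
    · simp [Pi.single_apply, apply_ite (aeval (R := R) _)]
    · exact Finset.sum_congr rfl fun k _ => by ring

/-- The Jacobian matrix at `x` of a tuple of polynomials `f`: its rows are indexed by the components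
of `f`, its columns by the variables. -/
noncomputable def jacobian (f : τ → MvPolynomial σ R) (x : σ → R) : Matrix τ σ R :=
  .of fun j i => eval x (pderiv i (f j))

end CommSemiring

section AlgebraicIndependence

variable {R A σ τ : Type*} [CommRing R] [CommRing A] [Algebra R A]

theorem algebraicIndependent_X_mul {w : τ → Polynomial A}
    (hw : AlgebraicIndependent R fun j => (w j).coeff 0) :
    AlgebraicIndependent R fun j => Polynomial.X * w j := by
  refine algebraicIndependent_iff.mpr fun p hp => ?_
  have hexpand : ∑ k ∈ Finset.range (p.totalDegree + 1),
      Polynomial.X ^ k * aeval w (homogeneousComponent k p) = 0 := by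
    rw [← hp]
    conv_rhs => rw [← sum_homogeneousComponent p, map_sum]
    exact Finset.sum_congr rfl fun k _ =>
      (aeval_mul_of_isHomogeneous (homogeneousComponent_isHomogeneous k p) _ w).symm
  have hzero : ∀ m ∈ Finset.range (p.totalDegree + 1), homogeneousComponent m p = 0 := by
    intro m hm
    induction m using Nat.strong_induction_on with
    | _ m ih =>
    refine hw.eq_zero_of_aeval_eq_zero _ ?_
    have hcoeff := congrArg (Polynomial.coeff · m) hexpand
    simp only [Polynomial.finsetSum_coeff, Polynomial.coeff_zero] at hcoeff
    rw [Finset.sum_eq_single_of_mem m hm] at hcoeff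
    · simpa [Polynomial.coeff_X_pow_mul', coeff_zero_aeval] using hcoeff
    · intro k hk hkm
      rcases hkm.lt_or_gt with hlt | hgt
      · simp [ih k hlt hk]
      · simp [Polynomial.coeff_X_pow_mul', hgt]
  rw [← sum_homogeneousComponent p]
  exact Finset.sum_eq_zero hzero

theorem algebraicIndependent_add_algebraMap {f : τ → A} (hf : AlgebraicIndependent R f)
    (c : τ → R) : AlgebraicIndependent R fun j => f j + algebraMap R A (c j) := by
  let translate : MvPolynomial τ R →ₐ[R] MvPolynomial τ R := aeval fun j => X j + C (c j)
  have hleft : (aeval fun j => X j - C (c j)).comp translate = AlgHom.id R _ := by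
    ext j; simp [translate, algebraMap_eq]
  have hcomp : (aeval fun j => f j + algebraMap R A (c j)) = (aeval f).comp translate := by
    ext j; simp [translate]
  have htranslate : Function.Injective translate :=
    .of_comp (f := aeval fun j => X j - C (c j)) <| by
      rw [← AlgHom.coe_comp, hleft]
      exact Function.injective_id
  rw [AlgebraicIndependent, hcomp, AlgHom.coe_comp]
  exact Function.Injective.comp hf htranslate

theorem algebraicIndependent_of_coeff_one {q : τ → Polynomial A} (c : τ → R)
    (hzero : ∀ j, (q j).coeff 0 = algebraMap R A (c j))
    (hone : AlgebraicIndependent R fun j => (q j).coeff 1) : AlgebraicIndependent R q := by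
  have hq : q = fun j => Polynomial.X * (q j).divX + algebraMap R (Polynomial A) (c j) := by
    funext j
    rw [Polynomial.algebraMap_apply, ← hzero, Polynomial.X_mul_divX_add]
  rw [hq]
  exact algebraicIndependent_add_algebraMap
    (algebraicIndependent_X_mul (by simpa only [Polynomial.coeff_divX] using hone)) c

theorem algebraicIndependent_of_jacobian_mulVec_surjective [Fintype σ] [Finite τ]
    (f : τ → MvPolynomial σ R) (x : σ → R)
    (hf : Function.Surjective (jacobian f x).mulVec) : AlgebraicIndependent R f := by
  classical
  cases nonempty_fintype τ
  obtain ⟨B, hB⟩ := Matrix.mulVec_surjective_iff_exists_right_inverse.mp hf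
  let line : σ → Polynomial (MvPolynomial τ R) := fun i =>
    Polynomial.C (C (x i)) + Polynomial.X * Polynomial.C (∑ k, C (B i k) * X k)
  have hline : ∀ p : MvPolynomial σ R, aeval (fun i => (line i).coeff 0) p = C (eval x p) := by
    intro p
    have hpoint : (fun i => (line i).coeff 0) = algebraMap R (MvPolynomial τ R) ∘ x := by
      ext1 i
      simp [line, algebraMap_eq]
    rw [hpoint]
    exact aeval_algebraMap_apply _ x p
  have hone : ∀ j, (aeval line (f j)).coeff 1 = X j := by
    intro j
    calc (aeval line (f j)).coeff 1
        = ∑ i, C (jacobian f x j i) * ∑ k, C (B i k) * X k := by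
          simp only [coeff_one_aeval, hline]
          simp [line, jacobian]
      _ = ∑ k, C ((jacobian f x * B) j k) * X k := by
          simp only [Matrix.mul_apply, map_sum, map_mul, Finset.mul_sum, Finset.sum_mul, mul_assoc]
          exact Finset.sum_comm
      _ = X j := by simp [hB, Matrix.one_apply]
  refine .of_comp (aeval line) (algebraicIndependent_of_coeff_one (fun j => eval x (f j)) ?_ ?_)
  · exact fun j => (coeff_zero_aeval line (f j)).trans (hline (f j))
  · simpa only [Function.comp_apply, hone] using algebraicIndependent_X τ R

end AlgebraicIndependence

section Chevalley

open PrimeSpectrum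

theorem exists_ne_zero_basicOpen_subset_of_isConstructible {R : Type*} [CommRing R] [IsDomain R]
    {s : Set (PrimeSpectrum R)} (hs : Topology.IsConstructible s) (hbot : ⊥ ∈ s) :
    ∃ r : R, r ≠ 0 ∧ (basicOpen r : Set (PrimeSpectrum R)) ⊆ s := by
  obtain ⟨S, rfl⟩ := exists_constructibleSetData_iff.mpr hs
  obtain ⟨D, hD, hg, hr⟩ := Set.mem_iUnion₂.mp hbot
  have hg' : Set.range D.g ⊆ {0} := hg
  refine ⟨D.f, by simpa using hr, fun q hq => Set.mem_biUnion hD ⟨?_, by simpa using hq⟩⟩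
  exact fun z hz => by rw [hg' hz]; exact zero_mem _

theorem exists_ne_zero_basicOpen_subset_range_comap {A B : Type*} [CommRing A] [IsDomain A]
    [CommRing B] [IsDomain B] {φ : A →+* B} (hφ : φ.FinitePresentation)
    (hinj : Function.Injective φ) :
    ∃ r : A, r ≠ 0 ∧ (basicOpen r : Set (PrimeSpectrum A)) ⊆ Set.range (comap φ) := by
  refine exists_ne_zero_basicOpen_subset_of_isConstructible (isConstructible_range_comap hφ)
    ⟨⊥, ?_⟩
  ext a
  exact map_eq_zero_iff φ hinj

end Chevalley

section IsDominantMap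

/-- A map `f : α → W` into a vector space is dominant if its range contains a nonempty basic
Zariski-open set, i.e. the locus where some polynomial function that is not identically zero does
not vanish. Polynomial functions on `W` are encoded without coordinates, as polynomials in the
linear functionals on `W`. -/
def IsDominantMap (K : Type*) [Field K] {α W : Type*} [AddCommGroup W] [Module K W]
    (f : α → W) : Prop :=
  ∃ p : MvPolynomial (Module.Dual K W) K,
    (∃ w₀ : W, aeval (fun φ : Module.Dual K W => φ w₀) p ≠ 0) ∧
    ∀ w : W, aeval (fun φ : Module.Dual K W => φ w) p ≠ 0 → w ∈ Set.range f

theorem IsDominantMap.of_linearEquiv {K : Type*} [Field K] {α β W W' : Type*} [AddCommGroup W]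
    [Module K W] [AddCommGroup W'] [Module K W'] {f : α → W} {g : β → W'} (hf : IsDominantMap K f)
    (e : W ≃ₗ[K] W') (hg : ∀ x, e (f x) ∈ Set.range g) : IsDominantMap K g := by
  obtain ⟨p, ⟨w₀, hw₀⟩, hrange⟩ := hf
  have heval (w : W') : aeval (fun φ : Module.Dual K W' => φ w)
      (rename (fun φ : Module.Dual K W => φ ∘ₗ e.symm.toLinearMap) p) =
        aeval (fun φ : Module.Dual K W => φ (e.symm w)) p := aeval_rename ..
  refine ⟨rename (fun φ => φ ∘ₗ e.symm.toLinearMap) p, ⟨e w₀, ?_⟩, fun w hw => ?_⟩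
  · rwa [heval, e.symm_apply_apply]
  · rw [heval] at hw
    obtain ⟨x, hx⟩ := hrange _ hw
    rw [← e.apply_symm_apply w, ← hx]
    exact hg x

variable {K σ τ : Type*} [Field K] [IsAlgClosed K]

theorem exists_eval_eq_of_pointToPoint_mem_range_comap [Finite σ] {f : τ → MvPolynomial σ K}
    {y : τ → K}
    (hy : pointToPoint y ∈ Set.range (PrimeSpectrum.comap (aeval (R := K) f).toRingHom)) :
    ∃ x : σ → K, ∀ j, eval x (f j) = y j := by
  obtain ⟨q, hq⟩ := hy
  obtain ⟨M, hM, hqM⟩ := q.asIdeal.exists_le_maximal q.2.ne_top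
  obtain ⟨x, rfl⟩ := isMaximal_iff_eq_vanishingIdeal_singleton.mp hM
  refine ⟨x, fun j => ?_⟩
  have hj : X j - C (y j) ∈ (pointToPoint (k := K) y).asIdeal := by
    simp [pointToPoint]
  rw [← hq] at hj
  simpa [sub_eq_zero, aeval_eq_eval] using hqM hj

theorem isDominantMap_eval_of_algebraicIndependent [Finite σ] [Finite τ] {f : τ → MvPolynomial σ K}
    (hf : AlgebraicIndependent K f) : IsDominantMap K fun x j => eval x (f j) := by
  have hfin : (aeval (R := K) f).FinitePresentation :=
    RingHom.FinitePresentation.of_finiteType.mp <|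
      RingHom.FiniteType.of_comp_finiteType (f := (C : K →+* MvPolynomial τ K)) <| by
        rw [← algebraMap_eq, AlgHom.toRingHom_eq_coe, AlgHom.comp_algebraMap,
          RingHom.finiteType_algebraMap]
        infer_instance
  obtain ⟨p, hp, hrange⟩ := exists_ne_zero_basicOpen_subset_range_comap hfin hf
  have heval (y : τ → K) :
      aeval (fun φ : Module.Dual K (τ → K) => φ y) (rename LinearMap.proj p) = eval y p := by
    rw [aeval_rename, ← aeval_eq_eval]
    rfl
  refine ⟨rename LinearMap.proj p, ?_, fun y hy => ?_⟩
  · simp only [heval]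
    by_contra! h
    exact hp (MvPolynomial.funext fun y => by rw [h, map_zero])
  · rw [heval] at hy
    obtain ⟨x, hx⟩ := exists_eval_eq_of_pointToPoint_mem_range_comap
      (hrange (by simpa [pointToPoint, aeval_eq_eval] using hy))
    exact ⟨x, funext hx⟩

theorem isDominantMap_eval_of_jacobian_mulVec_surjective [Fintype σ] [Finite τ]
    (f : τ → MvPolynomial σ K) (x : σ → K) (hf : Function.Surjective (jacobian f x).mulVec) :
    IsDominantMap K fun x j => eval x (f j) :=
  isDominantMap_eval_of_algebraicIndependent
    (algebraicIndependent_of_jacobian_mulVec_surjective f x hf)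

end IsDominantMap

section DiagonalPolynomial

variable {R V W σ τ : Type*} [CommSemiring R] [AddCommMonoid V] [Module R V] [AddCommMonoid W]
  [Module R W] [Fintype σ]

theorem sum_repr_mul_repr_apply (b : Module.Basis σ R V) (c : Module.Basis τ R W) (φ : V →ₗ[R] W)
    (y : V) (j : τ) : ∑ i, b.repr y i * c.repr (φ (b i)) j = c.repr (φ y) j := by
  conv_rhs => rw [← b.sum_repr y, map_sum, map_sum]
  simp

variable (B : V →ₗ[R] V →ₗ[R] W) (b : Module.Basis σ R V) (c : Module.Basis τ R W)

/-- The quadratic form expressing, in the basis `b` of `V`, the `j`-th coordinate of `B x x` with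
respect to the basis `c` of `W`. -/
noncomputable def diagonalPolynomial (j : τ) : MvPolynomial σ R :=
  ∑ k, ∑ l, C (c.repr (B (b k) (b l)) j) * (X k * X l)

theorem eval_diagonalPolynomial (x : V) (j : τ) :
    eval (b.repr x) (diagonalPolynomial B b c j) = c.repr (B x x) j := by
  conv_rhs => rw [← LinearMap.sum_repr_mul_repr_mul b b x x]
  simp [diagonalPolynomial, Finsupp.sum_fintype, mul_comm, mul_assoc]

theorem eval_pderiv_diagonalPolynomial (x : V) (j : τ) (i : σ) :
    eval (b.repr x) (pderiv i (diagonalPolynomial B b c j)) =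
      c.repr (B x (b i) + B (b i) x) j := by
  classical
  rw [map_add, Finsupp.add_apply, ← B.flip_apply, ← sum_repr_mul_repr_apply b c (B.flip (b i)) x,
    ← sum_repr_mul_repr_apply b c (B (b i)) x]
  simp [diagonalPolynomial, pderiv_X, Pi.single_apply, add_mul,
    Finset.sum_add_distrib, mul_comm]

theorem jacobian_diagonalPolynomial_mulVec (x y : V) :
    (jacobian (diagonalPolynomial B b c) (b.repr x)).mulVec (b.repr y) =
      c.repr (B x y + B y x) := by
  ext j
  have hsum := sum_repr_mul_repr_apply b c (B x + B.flip x) y j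
  simp only [LinearMap.add_apply, LinearMap.flip_apply] at hsum
  rw [← hsum]
  simp [Matrix.mulVec, dotProduct, jacobian, eval_pderiv_diagonalPolynomial, mul_comm]

end DiagonalPolynomial

section Bilinear

variable {K : Type*} [Field K] [IsAlgClosed K]

theorem isDominantMap_bilinear_diagonal {V W : Type*} [AddCommGroup V] [Module K V]
    [Module.Finite K V] [AddCommGroup W] [Module K W] [Module.Finite K W]
    (B : V →ₗ[K] V →ₗ[K] W) (x : V) (hB : ∀ w, ∃ y, B x y + B y x = w) :
    IsDominantMap K fun x => B x x := by
  let b := Module.finBasis K V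
  let c := Module.finBasis K W
  have hsurj : Function.Surjective (jacobian (diagonalPolynomial B b c) (b.repr x)).mulVec := by
    intro w
    obtain ⟨y, hy⟩ := hB (c.equivFun.symm w)
    refine ⟨b.repr y, ?_⟩
    rw [jacobian_diagonalPolynomial_mulVec, hy]
    exact c.equivFun.apply_symm_apply w
  refine (isDominantMap_eval_of_jacobian_mulVec_surjective _ _ hsurj).of_linearEquiv
    c.equivFun.symm fun v => ⟨b.equivFun.symm v, ?_⟩
  rw [LinearEquiv.eq_symm_apply]
  ext j
  conv_rhs => rw [← b.equivFun.apply_symm_apply v]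
  exact (eval_diagonalPolynomial B b c _ j).symm

theorem isDominantMap_sum_bilinear {ι : Type*} [Fintype ι] {U V : ι → Type*} {W : Type*}
    [∀ i, AddCommGroup (U i)] [∀ i, Module K (U i)] [∀ i, Module.Finite K (U i)]
    [∀ i, AddCommGroup (V i)] [∀ i, Module K (V i)] [∀ i, Module.Finite K (V i)]
    [AddCommGroup W] [Module K W] [Module.Finite K W]
    (μ : ∀ i, U i →ₗ[K] V i →ₗ[K] W) (F : ∀ i, U i) (G : ∀ i, V i)
    (hspan : ∀ w, ∃ (u : ∀ i, U i) (v : ∀ i, V i), ∑ i, (μ i (F i) (v i) + μ i (u i) (G i)) = w) :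
    IsDominantMap K fun x : ∀ i, U i × V i => ∑ i, μ i (x i).1 (x i).2 := by
  let B : (∀ i, U i × V i) →ₗ[K] (∀ i, U i × V i) →ₗ[K] W :=
    ∑ i, (μ i).compl₁₂ (LinearMap.fst K _ _ ∘ₗ LinearMap.proj i)
      (LinearMap.snd K _ _ ∘ₗ LinearMap.proj i)
  have hB (x y : ∀ i, U i × V i) : B x y = ∑ i, μ i (x i).1 (y i).2 := by simp [B]
  simp only [← hB]
  refine isDominantMap_bilinear_diagonal B (fun i => (F i, G i)) fun w => ?_
  obtain ⟨u, v, huv⟩ := hspan w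
  exact ⟨fun i => (u i, v i), by simpa only [hB, Finset.sum_add_distrib] using huv⟩

end Bilinear

section Homogeneous

variable {σ R : Type*} [CommSemiring R] {a b d : ℕ}

/-- Multiplication of forms of degrees `a` and `b`, as a bilinear map into the forms of degree `d`,
where `d` is only propositionally equal to `a + b`. -/
noncomputable def homogeneousMul (h : a + b = d) :
    homogeneousSubmodule σ R a →ₗ[R] homogeneousSubmodule σ R b →ₗ[R] homogeneousSubmodule σ R d :=
  LinearMap.mk₂ R (fun P Q => ⟨P * Q, h ▸ IsHomogeneous.mul P.2 Q.2⟩)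
    (fun _ _ _ => Subtype.ext (add_mul ..)) (fun _ _ _ => Subtype.ext (smul_mul_assoc ..))
    (fun _ _ _ => Subtype.ext (mul_add ..)) (fun _ _ _ => Subtype.ext (mul_smul_comm ..))

theorem coe_homogeneousMul_apply (h : a + b = d) (P : homogeneousSubmodule σ R a)
    (Q : homogeneousSubmodule σ R b) : (homogeneousMul h P Q : MvPolynomial σ R) = P * Q :=
  rfl

end Homogeneous

theorem stmt_15_general {K σ ι : Type*} [Field K] [IsAlgClosed K] [Finite σ] [Fintype ι] (d : ℕ)
    (a b : ι → ℕ) (hab : ∀ i, a i + b i = d) (F G : ι → MvPolynomial σ K)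
    (hF : ∀ i, (F i).IsHomogeneous (a i)) (hG : ∀ i, (G i).IsHomogeneous (b i))
    (hspan : ∀ H : MvPolynomial σ K, H.IsHomogeneous d →
      ∃ u v : ι → MvPolynomial σ K,
        (∀ i, (u i).IsHomogeneous (b i)) ∧ (∀ i, (v i).IsHomogeneous (a i)) ∧
        H = ∑ i, (F i * u i + G i * v i)) :
    ∃ p : MvPolynomial (Module.Dual K (homogeneousSubmodule σ K d)) K,
      (∃ H₀ : homogeneousSubmodule σ K d, aeval (fun φ => φ H₀) p ≠ 0) ∧
      ∀ H : homogeneousSubmodule σ K d, aeval (fun φ => φ H) p ≠ 0 →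
        ∃ P Q : ι → MvPolynomial σ K,
          (∀ i, (P i).IsHomogeneous (a i)) ∧ (∀ i, (Q i).IsHomogeneous (b i)) ∧
          (H : MvPolynomial σ K) = ∑ i, P i * Q i := by
  have hfinite (e : ℕ) : Module.Finite K (homogeneousSubmodule σ K e) :=
    Module.Finite.iff_fg.mpr (homogeneousSubmodule_fg σ K e)
  obtain ⟨p, hp, hrange⟩ := isDominantMap_sum_bilinear (fun i => homogeneousMul (hab i))
    (fun i => ⟨F i, hF i⟩) (fun i => ⟨G i, hG i⟩) fun H => by
      obtain ⟨u, v, hu, hv, huv⟩ := hspan H H.2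
      refine ⟨fun i => ⟨v i, hv i⟩, fun i => ⟨u i, hu i⟩, Subtype.ext ?_⟩
      simp [coe_homogeneousMul_apply, huv, mul_comm]
  refine ⟨p, hp, fun H hH => ?_⟩
  obtain ⟨x, rfl⟩ := hrange H hH
  exact ⟨fun i => (x i).1, fun i => (x i).2, fun i => (x i).1.2, fun i => (x i).2.2,
    by simp [coe_homogeneousMul_apply]⟩

/-- linear-algebra direction of Lemma 4.2: if there exist homogeneous
forms `Fᵢ` of degree `aᵢ` and `Gᵢ` of degree `d − aᵢ` with
`(F₁,G₁)_d + ⋯ + (F_r,G_r)_d = S_d`, then the sum-of-products map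
`((Pᵢ,Qᵢ))ᵢ ↦ ∑ PᵢQᵢ` is dominant onto `S_d`: its image contains the complement of
the zero locus of a nonzero polynomial function on `S_d` (polynomial functions being
given by polynomials in linear functionals). -/
theorem stmt_15 (n r d : ℕ) (a : Fin r → ℕ) (hda : ∀ i, a i ≤ d)
    (F G : Fin r → MvPolynomial (Fin (n + 1)) ℂ)
    (hF : ∀ i, (F i).IsHomogeneous (a i))
    (hG : ∀ i, (G i).IsHomogeneous (d - a i))
    (hspan : ∀ H : MvPolynomial (Fin (n + 1)) ℂ, H.IsHomogeneous d →
      ∃ u v : Fin r → MvPolynomial (Fin (n + 1)) ℂ,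
        (∀ i, (u i).IsHomogeneous (d - a i)) ∧ (∀ i, (v i).IsHomogeneous (a i)) ∧
        H = ∑ i, (F i * u i + G i * v i)) :
    ∃ p : MvPolynomial
        (Module.Dual ℂ (MvPolynomial.homogeneousSubmodule (Fin (n + 1)) ℂ d)) ℂ,
      (∃ H0 : MvPolynomial.homogeneousSubmodule (Fin (n + 1)) ℂ d,
        MvPolynomial.aeval (fun φ => φ H0) p ≠ 0) ∧
      ∀ H : MvPolynomial.homogeneousSubmodule (Fin (n + 1)) ℂ d,
        MvPolynomial.aeval (fun φ => φ H) p ≠ 0 →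
          ∃ P Q : Fin r → MvPolynomial (Fin (n + 1)) ℂ,
            (∀ i, (P i).IsHomogeneous (a i)) ∧
            (∀ i, (Q i).IsHomogeneous (d - a i)) ∧
            (H : MvPolynomial (Fin (n + 1)) ℂ) = ∑ i, P i * Q i :=
  stmt_15_general d a (fun i => d - a i) (fun i => Nat.add_sub_cancel' (hda i)) F G hF hG hspan
end

section
/- Let d > 2 and r ≤ n. There exist linear forms L₁,…,Lᵣ and degree-(d−1) forms F₁,…,Fᵣ in ℂ[x₀,…,xₙ] such that the degree-d piece of (L₁,…,Lᵣ,F₁,…,Fᵣ) is all of S_d if and only if binom(n−r+d, d) ≤ (n−r+1)r. -/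
open MvPolynomial

/-!
Choosing the `Lᵢ` amounts to restricting the `Fⱼ` to a linear subspace, so the heart of the matter
is the Hochster–Laksov theorem: if `N * r` is at least the number of monomials of degree `e + 1` in
`N` variables and `e ≥ 2`, then the products of the variables with `r` suitable forms of degree `e`
span all forms of degree `e + 1`. The converse is a dimension count.

Dually, no nonzero functional `φ` on forms of degree `e + 1` may satisfy `φ (x_a * F_j) = 0` for
all `a` and `j`. Over a finite field with `q` elements, count the pairs `(φ, F)` satisfying these
equations, sorting the `φ` by a set `A` of rows forming a basis of the row space of their
catalecticant matrix. Such a `φ` is determined by its values on the monomials in the variables of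
`A` and by the expressions of the other rows in this basis, while `F` runs over a space of
codimension `|A| * r`; hence each `A` contributes at most as many pairs as there are tuples `F`.
If every `F` were killed by some `φ ≠ 0`, the multiples of `φ` would give at least `q` pairs for
each `F`, which is impossible once `q > 2 ^ N`. So some maximal minor of the generic Macaulay
matrix is a polynomial that does not vanish identically modulo the characteristic of this finite
field. Taking the latter of the same characteristic as the given infinite field, or of large prime
characteristic if that is `0`, this minor does not vanish identically over the given field either.
-/

lemma mul_succ_le_two_mul_choose (m : ℕ) {e : ℕ} (he : 1 ≤ e) :
    m * (m + 1) ≤ 2 * (m + e).choose (e + 1) := by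
  induction e, he using Nat.le_induction with
  | base =>
    have h := Nat.add_one_mul_choose_eq m 1
    rw [Nat.choose_one_right] at h
    linarith
  | succ e _ ih =>
    rw [← add_assoc, Nat.choose_succ_succ']
    linarith

/-- Equivalently, `m ↦ (m + e).choose (e + 1) / m - m` is nondecreasing over the rationals. -/
lemma succ_mul_choose_add_le (m : ℕ) {e : ℕ} (he : 2 ≤ e) :
    (m + 1) * ((m + e).choose (e + 1) + m) ≤ m * (m + 1 + e).choose (e + 1) := by
  have hsucc := Nat.choose_mul_succ_eq (m + e) (e + 1)
  rw [show m + e + 1 - (e + 1) = m by omega, show m + e + 1 = m + 1 + e by ring] at hsucc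
  have htwo := mul_succ_le_two_mul_choose m (one_le_two.trans he)
  have hmul := Nat.mul_le_mul_right ((m + e).choose (e + 1)) he
  linarith

lemma choose_add_mul_le_of_choose_le {k j e r : ℕ} (he : 2 ≤ e)
    (h : (k + j + e).choose (e + 1) ≤ (k + j) * r) :
    (k + e).choose (e + 1) + k * j ≤ k * r := by
  induction j generalizing k with
  | zero => simpa using h
  | succ j ih =>
    have hnext := ih (k := k + 1) (by rwa [add_right_comm k 1 j])
    refine le_of_mul_le_mul_left (a := k + 1) ?_ k.succ_pos
    linarith [Nat.mul_le_mul_left k hnext, succ_mul_choose_add_le k he]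

variable {σ α β ι K : Type*} {e : ℕ}

/-- The set `A` indexes a basis of the row space of `M`. -/
def IsRowBasis [Semiring K] (M : Matrix α β K) (A : Finset α) : Prop :=
  LinearIndepOn K M.row A ∧ ∀ i, M.row i ∈ Submodule.span K (M.row '' A)

lemma exists_isRowBasis [Finite α] [Field K] (M : Matrix α β K) : ∃ A, IsRowBasis M A := by
  classical
  have := Fintype.ofFinite α
  obtain ⟨b, -, -, hspan, hli⟩ := exists_linearIndepOn_extension
    (linearIndepOn_empty K M.row) (Set.empty_subset Set.univ)
  exact ⟨b.toFinset, by simpa using hli, fun i => by simpa using hspan ⟨i, trivial, rfl⟩⟩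

lemma IsRowBasis.rank_eq_card [Finite α] [Fintype β] [Field K] {M : Matrix α β K} {A : Finset α}
    (h : IsRowBasis M A) : M.rank = A.card := by
  have hspan : Submodule.span K (Set.range M.row) = Submodule.span K (M.row '' A) :=
    le_antisymm (Submodule.span_le.2 <| Set.range_subset_iff.2 h.2)
      (Submodule.span_mono (Set.image_subset_range _ _))
  rw [Matrix.rank_eq_finrank_span_row, hspan, Set.image_eq_range,
    finrank_span_eq_card (b := fun a : (A : Set α) => M.row a) h.1]
  simp

lemma exists_submatrix_det_ne_zero [Finite α] [Fintype β] [DecidableEq β] [Field K]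
    {M : Matrix α β K} (hM : Function.Injective M.mulVec) :
    ∃ f : β → α, (M.submatrix f id).det ≠ 0 := by
  obtain ⟨A, hA⟩ := exists_isRowBasis M
  have hcard : Fintype.card β = Fintype.card A := by
    rw [Fintype.card_coe, ← hA.rank_eq_card, Matrix.rank, LinearMap.finrank_range_of_inj hM,
      Module.finrank_fintype_fun_eq_card]
  obtain ⟨f⟩ := Fintype.card_eq.1 hcard
  refine ⟨fun b => f b, ?_⟩
  rw [← isUnit_iff_ne_zero, ← Matrix.isUnit_iff_isUnit_det,
    ← Matrix.linearIndependent_rows_iff_isUnit]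
  exact hA.1.comp f f.injective

lemma mulVec_injective_of_submatrix_det_ne_zero {R : Type*} [Fintype β] [DecidableEq β]
    [CommRing R] [IsDomain R] {M : Matrix α β R} {f : β → α}
    (h : (M.submatrix f id).det ≠ 0) : Function.Injective M.mulVec := fun _ _ hxy =>
  Matrix.mulVec_injective_of_det_ne_zero h <| funext fun b => congrFun hxy (f b)

lemma exists_aeval_ne_zero {v R k : Type*} [CommRing R] [CommRing k] [Algebra R k]
    [CommRing K] [IsDomain K] [Infinite K] [Algebra R K]
    (hker : RingHom.ker (algebraMap R K) ≤ RingHom.ker (algebraMap R k))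
    {P : MvPolynomial v R} {x : v → k} (hx : aeval x P ≠ 0) : ∃ y : v → K, aeval y P ≠ 0 := by
  contrapose! hx
  have hmap : map (algebraMap R K) P = 0 :=
    MvPolynomial.funext fun y => by rw [eval_map, ← aeval_def, hx, map_zero]
  have hcoeff (u) : algebraMap R k (coeff u P) = 0 := hker <| by
    rw [RingHom.mem_ker, ← coeff_map, hmap, coeff_zero]
  simp [aeval_def, eval₂_eq, hcoeff]

lemma exists_mulVec_aeval_injective {v R k : Type*} [CommRing R] [Field k] [Algebra R k]
    [CommRing K] [IsDomain K] [Infinite K] [Algebra R K] [Finite α] [Fintype β]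
    (hker : RingHom.ker (algebraMap R K) ≤ RingHom.ker (algebraMap R k))
    {M : Matrix α β (MvPolynomial v R)} {x : v → k}
    (hx : Function.Injective (M.map (aeval x)).mulVec) :
    ∃ y : v → K, Function.Injective (M.map (aeval y)).mulVec := by
  classical
  obtain ⟨f, hf⟩ := exists_submatrix_det_ne_zero hx
  obtain ⟨y, hy⟩ := exists_aeval_ne_zero (K := K) hker ((AlgHom.map_det (aeval x) _).trans_ne hf)
  exact ⟨y, mulVec_injective_of_submatrix_det_ne_zero
    ((AlgHom.map_det (aeval y) (M.submatrix f id)).symm.trans_ne hy)⟩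

lemma exists_finite_field_lt_card (K : Type*) [Field K] (n : ℕ) :
    ∃ (k : Type) (_ : Field k) (_ : Finite k), n < Nat.card k ∧
      RingHom.ker (algebraMap ℤ K) ≤ RingHom.ker (algebraMap ℤ k) := by
  obtain ⟨p, _⟩ := CharP.exists K
  rcases CharP.char_is_prime_or_zero K p with hp | rfl
  · have : Fact p.Prime := ⟨hp⟩
    let k := GaloisField p (n + 1)
    refine ⟨k, inferInstance, inferInstance, ?_, fun z hz => ?_⟩
    · rw [GaloisField.card p _ n.succ_ne_zero]
      exact n.lt_succ_self.trans (Nat.lt_pow_self hp.one_lt)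
    · simpa [CharP.intCast_eq_zero_iff K p, CharP.intCast_eq_zero_iff k p] using hz
  · have := CharP.charP_to_charZero K
    obtain ⟨q, hq, hprime⟩ := Nat.exists_infinite_primes (n + 1)
    have : Fact q.Prime := ⟨hprime⟩
    refine ⟨ZMod q, inferInstance, inferInstance, by rwa [Nat.card_zmod], fun z hz => ?_⟩
    obtain rfl : z = 0 := by simpa using hz
    simp

lemma card_finset_sym [DecidableEq σ] (A : Finset σ) (n : ℕ) :
    (A.sym n).card = (A.card + n - 1).choose n := by
  conv_lhs => rw [← A.attach_map_val, Finset.sym_map, Finset.card_map]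
  rw [Finset.attach_eq_univ, Finset.sym_univ, Finset.card_univ, Sym.card_sym_eq_choose,
    Fintype.card_coe]

/-- The catalecticant (in degree `(1, e)`) of the functional on forms of degree `e + 1` whose value
at the monomial `t` is `φ t`: row `a` is the functional `f ↦ φ (x_a * f)` on forms of degree `e`. -/
def catalecticant (φ : Sym σ (e + 1) → K) : Matrix σ (Sym σ e) K :=
  Matrix.of fun a s => φ (a ::ₛ s)

lemma eq_of_eqOn_sym_of_cons_eq_sum [Semiring K] [DecidableEq σ] {A : Finset σ}
    {φ ψ : Sym σ (e + 1) → K} (c : {j // j ∉ A} → A → K)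
    (hφ : ∀ j s, φ (j.1 ::ₛ s) = ∑ a, c j a * φ (a.1 ::ₛ s))
    (hψ : ∀ j s, ψ (j.1 ::ₛ s) = ∑ a, c j a * ψ (a.1 ::ₛ s))
    (h : Set.EqOn φ ψ (A.sym (e + 1))) : φ = ψ := by
  funext t
  induction hn : (t : Multiset σ).countP (· ∉ A) using Nat.strong_induction_on generalizing t with
  | _ n ih =>
  by_cases ht : t ∈ A.sym (e + 1)
  · exact h ht
  rw [Finset.mem_sym_iff] at ht
  push Not at ht
  obtain ⟨j, hjt, hj⟩ := ht
  obtain ⟨s, rfl⟩ := Sym.exists_cons_of_mem hjt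
  rw [hφ ⟨j, hj⟩, hψ ⟨j, hj⟩]
  refine Finset.sum_congr rfl fun a _ => congrArg _ (ih _ ?_ _ rfl)
  simp only [← hn, Sym.coe_cons, Multiset.countP_cons, a.2, hj, not_true, not_false_eq_true,
    if_false, if_true]
  exact Nat.lt_succ_self _

lemma IsRowBasis.exists_cons_eq_sum [Field K] {φ : Sym σ (e + 1) → K} {A : Finset σ}
    (h : IsRowBasis (catalecticant φ) A) :
    ∃ c : {j // j ∉ A} → A → K, ∀ j s, φ (j.1 ::ₛ s) = ∑ a, c j a * φ (a.1 ::ₛ s) := by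
  choose c hc using fun j => (Submodule.mem_span_image_finset_iff_exists_fun K).1 (h.2 j)
  refine ⟨fun j => c j, fun j s => ?_⟩
  simpa [Finset.sum_apply] using! (congrFun (hc j) s).symm

lemma card_isRowBasis_catalecticant_le [Fintype σ] [Field K] [Finite K] (A : Finset σ) :
    Nat.card {φ : Sym σ (e + 1) → K // IsRowBasis (catalecticant φ) A} ≤
      Nat.card K ^ ((A.card + e).choose (e + 1) + A.card * (Fintype.card σ - A.card)) := by
  classical
  have := Fintype.ofFinite K
  choose c hc using fun φ : {φ : Sym σ (e + 1) → K // IsRowBasis (catalecticant φ) A} =>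
    φ.2.exists_cons_eq_sum
  let f (φ : {φ : Sym σ (e + 1) → K // IsRowBasis (catalecticant φ) A}) :
      (A.sym (e + 1) → K) × ({j // j ∉ A} → A → K) := (fun t => φ.1 t, c φ)
  have hf : f.Injective := fun φ ψ h => by
    obtain ⟨hsym, hcoeff : c φ = c ψ⟩ := Prod.ext_iff.1 h
    exact Subtype.ext <| eq_of_eqOn_sym_of_cons_eq_sum (c φ) (hc φ) (hcoeff ▸ hc ψ)
      fun t ht => congrFun hsym ⟨t, ht⟩
  refine (Nat.card_le_card_of_injective f hf).trans_eq ?_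
  rw [Nat.card_prod, Nat.card_fun, Nat.card_fun, Nat.card_fun, Nat.card_eq_fintype_card,
    Nat.card_eq_fintype_card, Nat.card_eq_fintype_card, Nat.card_eq_fintype_card,
    Fintype.card_coe, Fintype.card_coe, card_finset_sym, Fintype.card_subtype_compl,
    Fintype.card_coe, ← pow_mul, ← pow_add]
  rfl

lemma card_forall_mulVec_eq_zero_mul [Fintype β] [Fintype ι] [Field K] (M : Matrix α β K) :
    Nat.card {F : ι → β → K // ∀ j, M.mulVec (F j) = 0} * Nat.card K ^ (M.rank * Fintype.card ι) =
      Nat.card (ι → β → K) := by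
  have hker : Nat.card M.mulVecLin.ker * Nat.card K ^ M.rank = Nat.card (β → K) := by
    rw [Module.natCard_eq_pow_finrank (K := K) (V := M.mulVecLin.ker),
      Module.natCard_eq_pow_finrank (K := K) (V := β → K), ← pow_add,
      ← M.mulVecLin.finrank_range_add_finrank_ker, add_comm, Matrix.rank]
  rw [Nat.card_congr (Equiv.subtypePiEquivPi (p := fun _ f => M.mulVec f = 0)), Nat.card_fun,
    Nat.card_fun (α := ι), ← hker, mul_pow, pow_mul, Nat.card_eq_fintype_card (α := ι)]
  rfl

section Counting

variable [Fintype σ] [Fintype ι] [Field K] [Finite K] [DecidableEq σ]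

open Matrix

lemma sum_card_forall_mulVec_eq_zero_le (he : 2 ≤ e)
    (hι : (Fintype.card σ + e).choose (e + 1) ≤ Fintype.card σ * Fintype.card ι)
    (A : Finset σ) [Fintype {φ : Sym σ (e + 1) → K // IsRowBasis (catalecticant φ) A}] :
    ∑ φ : {φ : Sym σ (e + 1) → K // IsRowBasis (catalecticant φ) A},
      Nat.card {F : ι → Sym σ e → K // ∀ j, catalecticant φ.1 *ᵥ F j = 0} ≤
    Nat.card (ι → Sym σ e → K) := by
  refine le_of_mul_le_mul_right ?_ (pow_pos (Nat.card_pos (α := K)) (A.card * Fintype.card ι))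
  obtain ⟨j, hj⟩ := Nat.exists_eq_add_of_le A.card_le_univ
  have hexp := choose_add_mul_le_of_choose_le he (hj ▸ hι)
  have hbasis := card_isRowBasis_catalecticant_le (e := e) (K := K) A
  rw [hj, Nat.add_sub_cancel_left] at hbasis
  calc
    _ = ∑ _φ : {φ : Sym σ (e + 1) → K // IsRowBasis (catalecticant φ) A},
        Nat.card (ι → Sym σ e → K) := by
      rw [Finset.sum_mul]
      refine Finset.sum_congr rfl fun φ _ => ?_
      rw [← φ.2.rank_eq_card, card_forall_mulVec_eq_zero_mul]
    _ = Nat.card {φ : Sym σ (e + 1) → K // IsRowBasis (catalecticant φ) A} *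
        Nat.card (ι → Sym σ e → K) := by
      rw [Finset.sum_const, Finset.card_univ, ← Nat.card_eq_fintype_card, smul_eq_mul]
    _ ≤ _ := by
      rw [mul_comm]
      exact Nat.mul_le_mul_left _ (hbasis.trans (Nat.pow_le_pow_right Nat.card_pos hexp))

lemma card_forall_mulVec_eq_zero_le (he : 2 ≤ e)
    (hι : (Fintype.card σ + e).choose (e + 1) ≤ Fintype.card σ * Fintype.card ι) :
    Nat.card {p : (Sym σ (e + 1) → K) × (ι → Sym σ e → K) //
        ∀ j, catalecticant p.1 *ᵥ p.2 j = 0} ≤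
      2 ^ Fintype.card σ * Nat.card (ι → Sym σ e → K) := by
  classical
  choose A hA using fun φ : Sym σ (e + 1) → K => exists_isRowBasis (catalecticant φ)
  let f (p : {p : (Sym σ (e + 1) → K) × (ι → Sym σ e → K) //
      ∀ j, catalecticant p.1 *ᵥ p.2 j = 0}) :
      Σ (B : Finset σ) (φ : {φ : Sym σ (e + 1) → K // IsRowBasis (catalecticant φ) B}),
        {F : ι → Sym σ e → K // ∀ j, catalecticant φ.1 *ᵥ F j = 0} :=
    ⟨A p.1.1, ⟨p.1.1, hA _⟩, ⟨p.1.2, p.2⟩⟩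
  have hf : f.Injective := fun _ _ h =>
    Subtype.ext <| congrArg (fun x => (x.2.1.1, x.2.2.1)) h
  have := fun B : Finset σ =>
    Fintype.ofFinite {φ : Sym σ (e + 1) → K // IsRowBasis (catalecticant φ) B}
  calc
    _ ≤ _ := Nat.card_le_card_of_injective f hf
    _ = ∑ B : Finset σ, ∑ φ : {φ : Sym σ (e + 1) → K // IsRowBasis (catalecticant φ) B},
        Nat.card {F : ι → Sym σ e → K // ∀ j, catalecticant φ.1 *ᵥ F j = 0} := by
      rw [Nat.card_sigma]
      exact Finset.sum_congr rfl fun B _ => Nat.card_sigma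
    _ ≤ (Finset.univ : Finset (Finset σ)).card • Nat.card (ι → Sym σ e → K) :=
      Finset.sum_le_card_nsmul _ _ _ fun B _ => sum_card_forall_mulVec_eq_zero_le he hι B
    _ = _ := by rw [smul_eq_mul, Finset.card_univ, Fintype.card_finset]

lemma exists_forall_mulVec_eq_zero_imp_of_lt_card (he : 2 ≤ e)
    (hι : (Fintype.card σ + e).choose (e + 1) ≤ Fintype.card σ * Fintype.card ι)
    (hK : 2 ^ Fintype.card σ < Nat.card K) :
    ∃ F : ι → Sym σ e → K, ∀ φ : Sym σ (e + 1) → K,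
      (∀ j, catalecticant φ *ᵥ F j = 0) → φ = 0 := by
  by_contra! hbad
  choose φ hφ hφ_ne using hbad
  have hsmul (F) (u : K) (j) : catalecticant (u • φ F) *ᵥ F j = 0 := by
    rw [show catalecticant (u • φ F) = u • catalecticant (φ F) from rfl, smul_mulVec, hφ, smul_zero]
  let f (p : K × (ι → Sym σ e → K)) : {p : (Sym σ (e + 1) → K) × (ι → Sym σ e → K) //
      ∀ j, catalecticant p.1 *ᵥ p.2 j = 0} := ⟨(p.1 • φ p.2, p.2), hsmul _ _⟩
  have hf : f.Injective := by
    rintro ⟨u, F⟩ ⟨w, G⟩ h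
    obtain ⟨hfun, rfl⟩ : u • φ F = w • φ G ∧ F = G := Prod.ext_iff.1 (congrArg Subtype.val h)
    rw [smul_left_injective K (hφ_ne F) hfun]
  have hle := (Nat.card_le_card_of_injective f hf).trans (card_forall_mulVec_eq_zero_le he hι)
  rw [Nat.card_prod] at hle
  exact hK.not_ge (Nat.le_of_mul_le_mul_right hle Nat.card_pos)

end Counting

section Macaulay

open Matrix

/-- The degree `e + 1` Macaulay matrix of the forms with coefficients `F j`: its row `(j, a)` lists
the coefficients of `X a * F j`. -/
def macaulayMatrix {R : Type*} [Fintype σ] [DecidableEq σ] [Semiring R] (F : ι → Sym σ e → R) :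
    Matrix (ι × σ) (Sym σ (e + 1)) R :=
  Matrix.of fun x t => ∑ s, if x.2 ::ₛ s = t then F x.1 s else 0

lemma macaulayMatrix_mulVec {R : Type*} [Fintype σ] [DecidableEq σ] [CommSemiring R]
    (F : ι → Sym σ e → R) (φ : Sym σ (e + 1) → R) (j : ι) (a : σ) :
    (macaulayMatrix F *ᵥ φ) (j, a) = (catalecticant φ *ᵥ F j) a := by
  simp only [mulVec, dotProduct, macaulayMatrix, catalecticant, of_apply, Finset.sum_mul]
  rw [Finset.sum_comm]
  simp [mul_comm]

lemma macaulayMatrix_X_map_aeval {R S : Type*} [Fintype σ] [DecidableEq σ] [CommSemiring R]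
    [CommSemiring S] [Algebra R S] (y : ι × Sym σ e → S) :
    (macaulayMatrix fun j s => (X (j, s) : MvPolynomial (ι × Sym σ e) R)).map (aeval y) =
      macaulayMatrix fun j s => y (j, s) := by
  ext x t
  simp [macaulayMatrix, apply_ite (aeval y)]

lemma exists_macaulayMatrix_mulVec_injective [Fintype σ] [DecidableEq σ] [Fintype ι]
    (K : Type*) [Field K] [Infinite K] (he : 2 ≤ e)
    (hι : (Fintype.card σ + e).choose (e + 1) ≤ Fintype.card σ * Fintype.card ι) :
    ∃ F : ι → Sym σ e → K, (macaulayMatrix F).mulVec.Injective := by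
  obtain ⟨k, _, _, hcard, hker⟩ := exists_finite_field_lt_card K (2 ^ Fintype.card σ)
  obtain ⟨F, hF⟩ := exists_forall_mulVec_eq_zero_imp_of_lt_card (K := k) he hι hcard
  have hinj : (macaulayMatrix F).mulVec.Injective := by
    refine (injective_iff_map_eq_zero (macaulayMatrix F).mulVecLin).2 fun φ hφ => hF φ fun j => ?_
    ext a
    rw [← macaulayMatrix_mulVec]
    exact congrFun hφ (j, a)
  obtain ⟨y, hy⟩ := exists_mulVec_aeval_injective (K := K) hker
    (M := macaulayMatrix fun j s => X (j, s)) (x := fun x => F x.1 x.2)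
    (by rwa [macaulayMatrix_X_map_aeval])
  exact ⟨fun j s => y (j, s), by rwa [macaulayMatrix_X_map_aeval] at hy⟩

end Macaulay

section SymMonomial

variable {R : Type*} [CommSemiring R] [DecidableEq σ] {n : ℕ}

/-- The monomial with a given multiset of `n` variables. -/
noncomputable def symMonomial (R : Type*) [CommSemiring R] (s : Sym σ n) : MvPolynomial σ R :=
  monomial (Multiset.toFinsupp (s : Multiset σ)) 1

lemma symMonomial_cons (a : σ) (s : Sym σ n) :
    symMonomial R (a ::ₛ s) = X a * symMonomial R s := by
  rw [symMonomial, symMonomial, Sym.coe_cons, ← Multiset.singleton_add, Multiset.toFinsupp_add,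
    Multiset.toFinsupp_singleton, X, monomial_mul, one_mul]

variable (σ R n)

lemma linearIndependent_symMonomial :
    LinearIndependent R (symMonomial R : Sym σ n → MvPolynomial σ R) := by
  have hbasis := (basisMonomials σ R).linearIndependent
  rw [coe_basisMonomials] at hbasis
  exact hbasis.comp _ (Multiset.toFinsupp.injective.comp Sym.coe_injective)

lemma span_range_symMonomial :
    Submodule.span R (Set.range (symMonomial R : Sym σ n → MvPolynomial σ R)) =
      homogeneousSubmodule σ R n := by
  rw [homogeneousSubmodule_eq_finsupp_supported, AddMonoidAlgebra.supported_eq_span_single]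
  congr 1
  ext p
  constructor
  · rintro ⟨s, rfl⟩
    exact ⟨_, (Multiset.toFinsupp_sum_eq (s : Multiset σ)).trans s.2, rfl⟩
  · rintro ⟨u, hu, rfl⟩
    refine ⟨⟨Finsupp.toMultiset u, (Finsupp.card_toMultiset u).trans hu⟩, ?_⟩
    simp [symMonomial, single_eq_monomial]

end SymMonomial

lemma finrank_homogeneousSubmodule (σ R : Type*) [Fintype σ] [CommSemiring R]
    [StrongRankCondition R] (n : ℕ) :
    Module.finrank R (homogeneousSubmodule σ R n) = (Fintype.card σ + n - 1).choose n := by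
  classical
  have := nontrivial_of_invariantBasisNumber R
  rw [← span_range_symMonomial, finrank_span_eq_card (linearIndependent_symMonomial σ R n),
    Sym.card_sym_eq_choose]

/-- The Hochster–Laksov theorem. -/
lemma exists_forms_forall_mem_span [Fintype σ] [Fintype ι] (K : Type*) [Field K] [Infinite K]
    (he : 2 ≤ e)
    (hι : (Fintype.card σ + e).choose (e + 1) ≤ Fintype.card σ * Fintype.card ι) :
    ∃ F : ι → MvPolynomial σ K, (∀ j, (F j).IsHomogeneous e) ∧
      ∀ H : MvPolynomial σ K, H.IsHomogeneous (e + 1) → H ∈ Ideal.span (Set.range F) := by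
  classical
  obtain ⟨c, hc⟩ := exists_macaulayMatrix_mulVec_injective K he hι
  let F (j : ι) : MvPolynomial σ K := ∑ s, c j s • symMonomial K s
  refine ⟨F, fun j => ?_, fun H hH => ?_⟩
  · rw [← mem_homogeneousSubmodule, ← span_range_symMonomial]
    exact Submodule.sum_smul_mem _ _ fun s _ => Submodule.subset_span ⟨s, rfl⟩
  by_contra hmem
  obtain ⟨ψ, hψH, hψ⟩ := Submodule.exists_le_ker_of_notMem
    (p := (Ideal.span (Set.range F)).restrictScalars K) hmem
  have hzero : (fun t => ψ (symMonomial K t)) = (0 : Sym σ (e + 1) → K) := hc <| by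
    ext ⟨j, a⟩
    rw [macaulayMatrix_mulVec, Matrix.mulVec_zero, Pi.zero_apply]
    refine Eq.trans ?_ (hψ (Ideal.mul_mem_left _ (X a) (Ideal.subset_span ⟨j, rfl⟩)))
    simp [F, Finset.mul_sum, Matrix.mulVec, dotProduct, catalecticant, symMonomial_cons, mul_comm]
  rw [← mem_homogeneousSubmodule, ← span_range_symMonomial] at hH
  have hker : Submodule.span K (Set.range (symMonomial K)) ≤ LinearMap.ker ψ :=
    Submodule.span_le.2 (Set.range_subset_iff.2 fun t => congrFun hzero t)
  exact hψH (hker hH)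

lemma isHomogeneous_bind₁ {τ R : Type*} [CommSemiring R] {g : σ → MvPolynomial τ R}
    (hg : ∀ i, (g i).IsHomogeneous 1) {p : MvPolynomial σ R} {n : ℕ} (hp : p.IsHomogeneous n) :
    (bind₁ g p).IsHomogeneous n :=
  one_mul n ▸ hp.aeval g hg

section KillCompl

variable {τ R : Type*} {f : τ → σ}

lemma isHomogeneous_killCompl [CommSemiring R] (hf : f.Injective) {p : MvPolynomial σ R} {n : ℕ}
    (hp : p.IsHomogeneous n) : (killCompl hf p).IsHomogeneous n := by
  classical
  refine isHomogeneous_bind₁ (fun i => ?_) hp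
  split_ifs
  exacts [isHomogeneous_X _ _, isHomogeneous_zero _ _ _]

lemma sub_rename_killCompl_mem_span [CommRing R] (hf : f.Injective) (p : MvPolynomial σ R) :
    p - rename f (killCompl hf p) ∈ Ideal.span (X '' (Set.range f)ᶜ) := by
  let I : Ideal (MvPolynomial σ R) := Ideal.span (X '' (Set.range f)ᶜ)
  have hcomp : (Ideal.Quotient.mkₐ R I).comp ((rename f).comp (killCompl hf)) =
      Ideal.Quotient.mkₐ R I := by
    refine algHom_ext fun i => ?_
    by_cases hi : i ∈ Set.range f
    · obtain ⟨a, rfl⟩ := hi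
      rw [AlgHom.comp_apply, AlgHom.comp_apply, ← rename_X, killCompl_rename_app]
    · have hX : X i ∈ I := Ideal.subset_span ⟨i, hi, rfl⟩
      simp [killCompl, hi, Ideal.Quotient.eq_zero_iff_mem.2 hX]
  exact Ideal.Quotient.eq.1 (DFunLike.congr_fun hcomp p).symm

end KillCompl

lemma exists_linear_forms_forall_mem_span {τ κ : Type*} [Fintype τ] [Fintype ι] (K : Type*)
    [Field K] [Infinite K] (g : τ ⊕ κ ≃ σ) (he : 2 ≤ e)
    (hι : (Fintype.card τ + e).choose (e + 1) ≤ Fintype.card τ * Fintype.card ι) :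
    ∃ (L : κ → MvPolynomial σ K) (F : ι → MvPolynomial σ K),
      (∀ k, (L k).IsHomogeneous 1) ∧ (∀ j, (F j).IsHomogeneous e) ∧
      ∀ H : MvPolynomial σ K, H.IsHomogeneous (e + 1) →
        H ∈ Ideal.span (Set.range L ∪ Set.range F) := by
  obtain ⟨F, hF, hspan⟩ := exists_forms_forall_mem_span K he hι
  have hg : (g ∘ Sum.inl).Injective := g.injective.comp Sum.inl_injective
  have hcompl : (X '' (Set.range (g ∘ Sum.inl))ᶜ : Set (MvPolynomial σ K)) ⊆
      Set.range fun k => X (g (Sum.inr k)) := by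
    rintro _ ⟨i, hi, rfl⟩
    obtain ⟨a | k, rfl⟩ := g.surjective i
    exacts [absurd ⟨a, rfl⟩ hi, ⟨k, rfl⟩]
  refine ⟨fun k => X (g (Sum.inr k)), fun j => rename (g ∘ Sum.inl) (F j),
    fun k => isHomogeneous_X _ _, fun j => (hF j).rename_isHomogeneous, fun H hH => ?_⟩
  rw [Ideal.span_union, ← sub_add_cancel H (rename (g ∘ Sum.inl) (killCompl hg H))]
  refine Submodule.add_mem_sup (Ideal.span_mono hcompl (sub_rename_killCompl_mem_span hg H)) ?_
  rw [← Function.comp_def, Set.range_comp, ← Ideal.map_span]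
  exact Ideal.mem_map_of_mem _ (hspan _ (isHomogeneous_killCompl hg hH))

lemma homogeneousComponent_add_mul {R : Type*} [CommSemiring R] {G : MvPolynomial σ R}
    (hG : G.IsHomogeneous e) (p : MvPolynomial σ R) (i : ℕ) :
    homogeneousComponent (i + e) (p * G) = homogeneousComponent i p * G := by
  let _ := gradedAlgebra (σ := σ) (R := R)
  simpa only [← decomposition.decompose'_apply] using!
    DirectSum.coe_decompose_mul_add_of_right_mem (homogeneousSubmodule σ R) (i := i) (a := p) hG

lemma mem_span_range_X_mul {R : Type*} [CommSemiring R] [Finite ι]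
    {G : ι → MvPolynomial σ R} (hG : ∀ j, (G j).IsHomogeneous e) {H : MvPolynomial σ R}
    (hH : H.IsHomogeneous (e + 1)) (hmem : H ∈ Ideal.span (Set.range G)) :
    H ∈ Submodule.span R (Set.range fun x : ι × σ => X x.2 * G x.1) := by
  have := Fintype.ofFinite ι
  obtain ⟨p, rfl⟩ := Ideal.mem_span_range_iff_exists_fun.1 hmem
  rw [← homogeneousComponent_eq_self hH, map_sum]
  refine Submodule.sum_mem _ fun j _ => ?_
  rw [add_comm e 1, homogeneousComponent_add_mul (hG j)]
  have hlinear := homogeneousComponent_mem 1 (p j)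
  rw [homogeneousSubmodule_one_eq_span_X] at hlinear
  suffices hle : Submodule.span R (Set.range X) ≤
      (Submodule.span R (Set.range fun x : ι × σ => X x.2 * G x.1)).comap
        (LinearMap.mulRight R (G j)) from hle hlinear
  rw [Submodule.span_le]
  rintro _ ⟨a, rfl⟩
  exact Submodule.subset_span ⟨(j, a), rfl⟩

lemma choose_le_of_forall_mem_span [Fintype σ] [Fintype ι] [Field K]
    {G : ι → MvPolynomial σ K} (hG : ∀ j, (G j).IsHomogeneous e)
    (h : ∀ H : MvPolynomial σ K, H.IsHomogeneous (e + 1) → H ∈ Ideal.span (Set.range G)) :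
    (Fintype.card σ + e).choose (e + 1) ≤ Fintype.card σ * Fintype.card ι := by
  classical
  have := Module.Finite.span_of_finite K (Set.finite_range fun x : ι × σ => X x.2 * G x.1)
  calc
    _ = Module.finrank K (homogeneousSubmodule σ K (e + 1)) :=
      (finrank_homogeneousSubmodule σ K (e + 1)).symm
    _ ≤ Module.finrank K (Submodule.span K (Set.range fun x : ι × σ => X x.2 * G x.1)) :=
      Submodule.finrank_mono fun H hH => mem_span_range_X_mul hG hH (h H hH)
    _ ≤ Fintype.card (ι × σ) := finrank_range_le_card _
    _ = _ := by rw [Fintype.card_prod, mul_comm]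

lemma exists_toMvPolynomial_eq {R : Type*} [CommSemiring R] [Fintype σ] {κ : Type*}
    {L : κ → MvPolynomial σ R} (hL : ∀ k, (L k).IsHomogeneous 1) :
    ∃ C : Matrix κ σ R, C.toMvPolynomial = L := by
  have hspan (k) : L k ∈ Submodule.span R (Set.range X) := by
    rw [← homogeneousSubmodule_one_eq_span_X]
    exact hL k
  choose C hC using fun k => (Submodule.mem_span_range_iff_exists_fun R).1 (hspan k)
  refine ⟨Matrix.of C, funext fun k => (hC k).symm ▸ ?_⟩
  simp [Matrix.toMvPolynomial, smul_eq_C_mul, C_mul_X_eq_monomial]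

lemma exists_mul_eq_zero_and_mul_eq_one {κ : Type*} [Fintype κ] [Fintype σ] [Field K]
    (C : Matrix κ σ K) {m : ℕ} (hm : m + Fintype.card κ ≤ Fintype.card σ) :
    ∃ (A : Matrix σ (Fin m) K) (B : Matrix (Fin m) σ K), C * A = 0 ∧ B * A = 1 := by
  classical
  have hker : m ≤ Module.finrank K C.toLin'.ker := by
    have hrank := C.toLin'.finrank_range_add_finrank_ker
    have hrange := C.toLin'.range.finrank_le
    rw [Module.finrank_fintype_fun_eq_card] at hrank hrange
    omega
  obtain ⟨v, hv⟩ := exists_linearIndependent_of_le_finrank hker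
  let f := C.toLin'.ker.subtype ∘ₗ Fintype.linearCombination K v
  have hf : f.ker = ⊥ := LinearMap.ker_eq_bot.2 <|
    Subtype.val_injective.comp (hv.fintypeLinearCombination_injective)
  have hCf : C.toLin' ∘ₗ f = 0 := LinearMap.ext fun x => (Fintype.linearCombination K v x).2
  obtain ⟨g, hg⟩ := f.exists_leftInverse_of_injective hf
  refine ⟨f.toMatrix', g.toMatrix', ?_, ?_⟩
  · conv_lhs => rw [← LinearMap.toMatrix'_toLin' C, ← LinearMap.toMatrix'_comp, hCf, map_zero]
  · rw [← LinearMap.toMatrix'_comp, hg, LinearMap.toMatrix'_id]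

lemma choose_le_of_forall_mem_span_union {κ : Type*} [Fintype κ] [Fintype σ] [Fintype ι] [Field K]
    {m : ℕ} (hm : m + Fintype.card κ ≤ Fintype.card σ) {L : κ → MvPolynomial σ K}
    {F : ι → MvPolynomial σ K} (hL : ∀ k, (L k).IsHomogeneous 1) (hF : ∀ j, (F j).IsHomogeneous e)
    (h : ∀ H : MvPolynomial σ K, H.IsHomogeneous (e + 1) →
      H ∈ Ideal.span (Set.range L ∪ Set.range F)) :
    (m + e).choose (e + 1) ≤ m * Fintype.card ι := by
  classical
  obtain ⟨C, rfl⟩ := exists_toMvPolynomial_eq hL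
  obtain ⟨A, B, hCA, hBA⟩ := exists_mul_eq_zero_and_mul_eq_one C hm
  let π := bind₁ A.toMvPolynomial
  let ρ := bind₁ B.toMvPolynomial
  have hπL (k) : π (C.toMvPolynomial k) = 0 := by
    rw [← Matrix.toMvPolynomial_mul, hCA, Matrix.toMvPolynomial_zero, Pi.zero_apply]
  have hπρ (H) : π (ρ H) = H := by
    simp only [π, ρ, bind₁_bind₁, ← Matrix.toMvPolynomial_mul, hBA, Matrix.toMvPolynomial_one]
    exact aeval_X_left_apply H
  suffices hmem : ∀ H : MvPolynomial (Fin m) K, H.IsHomogeneous (e + 1) →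
      H ∈ Ideal.span (Set.range fun j => π (F j)) by
    simpa using choose_le_of_forall_mem_span (fun j =>
      isHomogeneous_bind₁ A.toMvPolynomial_isHomogeneous (hF j)) hmem
  intro H hH
  have hle : Ideal.span (Set.range C.toMvPolynomial ∪ Set.range F) ≤
      (Ideal.span (Set.range fun j => π (F j))).comap π := by
    rw [Ideal.span_le]
    rintro _ (⟨k, rfl⟩ | ⟨j, rfl⟩)
    · simp [hπL]
    · exact Ideal.subset_span ⟨j, rfl⟩
  have hρH : (ρ H).IsHomogeneous (e + 1) :=
    isHomogeneous_bind₁ B.toMvPolynomial_isHomogeneous hH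
  simpa only [Ideal.mem_comap, hπρ] using hle (h (ρ H) hρH)

theorem stmt_16_general (K : Type*) [Field K] [Infinite K] {σ κ ι : Type*} [Fintype σ] [Fintype κ]
    [Fintype ι] {m d : ℕ} (hd : 2 < d) (hσ : Fintype.card σ = m + Fintype.card κ) :
    (∃ (L : κ → MvPolynomial σ K) (F : ι → MvPolynomial σ K),
      (∀ k, (L k).IsHomogeneous 1) ∧ (∀ j, (F j).IsHomogeneous (d - 1)) ∧
      ∀ H : MvPolynomial σ K, H.IsHomogeneous d →
        H ∈ Ideal.span (Set.range L ∪ Set.range F)) ↔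
    (m + (d - 1)).choose d ≤ m * Fintype.card ι := by
  obtain ⟨e, rfl⟩ : ∃ e, d = e + 1 := ⟨d - 1, by omega⟩
  rw [Nat.add_sub_cancel]
  constructor
  · rintro ⟨L, F, hL, hF, h⟩
    exact choose_le_of_forall_mem_span_union hσ.ge hL hF h
  · intro h
    obtain ⟨g⟩ : Nonempty (Fin m ⊕ κ ≃ σ) := Fintype.card_eq.1 (by simpa using hσ.symm)
    exact exists_linear_forms_forall_mem_span K g (by omega) (by simpa using h)

/-- Proposition 5.4: for `d > 2` and `r ≤ n`, there exist linear forms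
`L₁,…,L_r` and forms `F₁,…,F_r` of degree `d−1` in `ℂ[x₀,…,xₙ]` whose ideal contains
every form of degree `d` iff `binom(n−r+d, d) ≤ (n−r+1)r`. -/
theorem stmt_16 (n r d : ℕ) (hd : 2 < d) (hr : 0 < r) (hrn : r ≤ n) :
    (∃ L F : Fin r → MvPolynomial (Fin (n + 1)) ℂ,
      (∀ i, (L i).IsHomogeneous 1) ∧ (∀ i, (F i).IsHomogeneous (d - 1)) ∧
      ∀ H : MvPolynomial (Fin (n + 1)) ℂ, H.IsHomogeneous d →
        H ∈ Ideal.span (Set.range L ∪ Set.range F)) ↔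
    (n - r + d).choose d ≤ (n - r + 1) * r := by
  rw [show n - r + d = n - r + 1 + (d - 1) by omega]
  simpa using stmt_16_general ℂ (σ := Fin (n + 1)) (κ := Fin r) (ι := Fin r) (m := n - r + 1)
    hd (by rw [Fintype.card_fin, Fintype.card_fin]; omega)
end
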